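/- Let E, F be finite sets of variables and S, K ∈ ℕ with S > 0 and K > 0. Then B(E, S) ≤_T B(F, K) if and only if F ⊆ E and S ≤ K. -/

import Mathlib

/-- The impredicative maximum on natural numbers. -/
def imaxN : ℕ → ℕ → ℕ
  | _, 0 => 0
  | i, (j+1) => max i (j+1)

/-- Sublevels A(E,x,S) and B(E,S). -/
inductive SubLvl where
  | A : Finset ℕ → ℕ → ℕ → SubLvl
  | B : Finset ℕ → ℕ → SubLvl
deriving DecidableEq

/-- Value of a sublevel under a valuation. -/
def evalS (σ : ℕ → ℕ) : SubLvl → ℕ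
  | .A E x S => if ∃ y ∈ E, σ y = 0 then 0 else σ x + S
  | .B E S => if ∃ y ∈ E, σ y = 0 then 0 else S

/-- Wellformed sublevels. -/
def Wf : SubLvl → Prop
  | .A E x _ => x ∈ E
  | .B _ S => 0 < S

/-- Semantic comparison of sublevels. -/
def leT (u v : SubLvl) : Prop := ∀ σ : ℕ → ℕ, evalS σ u ≤ evalS σ v

theorem leT_B_of_subset_of_le {E F : Finset ℕ} {S K : ℕ} (hFE : F ⊆ E) (hSK : S ≤ K) :
    leT (SubLvl.B E S) (SubLvl.B F K) := by
  intro σ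
  by_cases hE : ∃ y ∈ E, σ y = 0
  · simp [evalS, hE]
  · have hF : ¬ ∃ y ∈ F, σ y = 0 := fun ⟨y, hyF, hy⟩ => hE ⟨y, hFE hyF, hy⟩
    simpa only [evalS, if_neg hE, if_neg hF] using hSK

theorem evalS_indicator_B (E F : Finset ℕ) (K : ℕ) :
    evalS (Set.indicator E 1) (SubLvl.B F K) = if F ⊆ E then K else 0 := by
  have exists_zero_iff : (∃ y ∈ F, Set.indicator (E : Set ℕ) (1 : ℕ → ℕ) y = 0) ↔ ¬ F ⊆ E := by
    simp [Finset.not_subset]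
  simp only [evalS, exists_zero_iff, ite_not]

theorem B_le_B_iff (E F : Finset ℕ) (S K : ℕ) (hS : 0 < S) (hK : 0 < K) :
    leT (SubLvl.B E S) (SubLvl.B F K) ↔ F ⊆ E ∧ S ≤ K := by
  refine ⟨fun h => ?_, fun ⟨hFE, hSK⟩ => leT_B_of_subset_of_le hFE hSK⟩
  -- The indicator of `E` is the least valuation at which `B E S` does not vanish.
  have hle : S ≤ if F ⊆ E then K else 0 := by
    simpa only [evalS_indicator_B, Finset.Subset.refl, if_true] using h (Set.indicator E 1)
  have hFE : F ⊆ E := by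
    by_contra hFE
    rw [if_neg hFE] at hle
    exact hS.not_ge hle
  exact ⟨hFE, by rwa [if_pos hFE] at hle⟩
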